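/- Let U be the group of upper unitriangular 3×3 matrices over ℂ, and let x = [[1, 1, 1],[0, 1, 0],[0, 0, 1]] and y = [[1, 0, 1],[0, 1, 1],[0, 0, 1]]. Then the centralizers Z_U(x) and Z_U(y) are not conjugate in U: there is no u ∈ U with u·Z_U(x)·u⁻¹ = Z_U(y). -/

import Mathlib

/-- `m` is an upper unitriangular `3 × 3` matrix. -/
def IsUnitriangular (m : Matrix (Fin 3) (Fin 3) ℂ) : Prop :=
  m 0 0 = 1 ∧ m 1 1 = 1 ∧ m 2 2 = 1 ∧ m 1 0 = 0 ∧ m 2 0 = 0 ∧ m 2 1 = 0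

/-- The centraliser, in the group `U` of upper unitriangular `3 × 3` matrices,
of a matrix `g`. -/
def ZU (g : Matrix (Fin 3) (Fin 3) ℂ) : Set (Matrix (Fin 3) (Fin 3) ℂ) :=
  {u | IsUnitriangular u ∧ u * g = g * u}

/-!
The superdiagonal entries of upper unitriangular matrices add up under multiplication, so they are
invariant under conjugation. Comparing the entries two steps above the diagonal in `v * h = h * v`
gives `v i j * h j k = h i j * v j k` for consecutive indices `i`, `j`, `k`. Hence a conjugate of
`g` can commute with `h` only if `g i j * h j k = h i j * g j k`, which for `g = x` and `h = y`
would read `1 * 1 = 0 * 0`.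
-/

open Matrix

section LinearOrder

variable {n R : Type*} [LinearOrder n] {i j k : n}

/-- A square matrix, indexed by any linear order, that is upper triangular with ones
on the diagonal; on `3 × 3` complex matrices it agrees with `IsUnitriangular`. -/
structure IsUpperUnitriangular [Zero R] [One R] (M : Matrix n n R) : Prop where
  isUpperTriangular : M.IsUpperTriangular
  diag_eq_one (i : n) : M i i = 1

/-- The centralizer of a matrix `g` in the group of upper unitriangular matrices, as a set of
matrices; on `3 × 3` complex matrices it agrees with `ZU`. -/
def unitriangularCentralizer [Fintype n] [Semiring R] (g : Matrix n n R) : Set (Matrix n n R) :=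
  {u | IsUpperUnitriangular u ∧ Commute u g}

theorem mul_apply_of_isUpperTriangular [Fintype n] [NonUnitalNonAssocSemiring R]
    {M N : Matrix n n R} (hM : M.IsUpperTriangular) (hN : N.IsUpperTriangular)
    {s : Finset n} (hs : Set.Icc i k ⊆ s) : (M * N) i k = ∑ l ∈ s, M i l * N l k := by
  rw [mul_apply]
  refine (Finset.sum_subset s.subset_univ fun l _ hl => ?_).symm
  have l_notMem_Icc : ¬(i ≤ l ∧ l ≤ k) := fun h => hl (hs h)
  rcases not_and_or.mp l_notMem_Icc with hil | hlk
  · rw [hM (not_le.mp hil), zero_mul]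
  · rw [hN (not_le.mp hlk), mul_zero]

namespace IsUpperUnitriangular

section Semiring

variable [Fintype n] [Semiring R] {M N : Matrix n n R}

theorem mul_apply_of_covBy (hM : IsUpperUnitriangular M) (hN : IsUpperUnitriangular N)
    (hij : i ⋖ j) : (M * N) i j = M i j + N i j := by
  have Icc_subset : Set.Icc i j ⊆ ({i, j} : Finset n) := by simp [hij.Icc_eq]
  rw [mul_apply_of_isUpperTriangular hM.isUpperTriangular hN.isUpperTriangular Icc_subset,
    Finset.sum_pair hij.ne, hM.diag_eq_one, hN.diag_eq_one, one_mul, mul_one, add_comm]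

theorem mul_apply_of_covBy_of_covBy (hM : IsUpperUnitriangular M) (hN : IsUpperUnitriangular N)
    (hij : i ⋖ j) (hjk : j ⋖ k) : (M * N) i k = M i j * N j k + (M i k + N i k) := by
  have Icc_subset : Set.Icc i k ⊆ ({i, j, k} : Finset n) := by
    rw [← Set.Icc_union_Icc_eq_Icc hij.le hjk.le, hij.Icc_eq, hjk.Icc_eq]
    simp [Set.insert_subset_iff]
  rw [mul_apply_of_isUpperTriangular hM.isUpperTriangular hN.isUpperTriangular Icc_subset,
    Finset.sum_insert (by simp [hij.ne, (hij.lt.trans hjk.lt).ne]), Finset.sum_pair hjk.ne,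
    hM.diag_eq_one, hN.diag_eq_one, one_mul, mul_one, add_left_comm, add_comm (N i k)]

end Semiring

section Ring

variable [Fintype n] [Ring R] {u v g h : Matrix n n R}

theorem apply_eq_of_semiconjBy (hu : IsUpperUnitriangular u) (hg : IsUpperUnitriangular g)
    (hv : IsUpperUnitriangular v) (huv : SemiconjBy u g v) (hij : i ⋖ j) : v i j = g i j := by
  have entry : (u * g) i j = (v * u) i j := congr_fun₂ huv.eq i j
  rw [hu.mul_apply_of_covBy hg hij, hv.mul_apply_of_covBy hu hij, add_comm] at entry
  exact (add_right_cancel entry).symm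

theorem apply_mul_apply_eq_of_commute (hv : IsUpperUnitriangular v) (hh : IsUpperUnitriangular h)
    (hvh : Commute v h) (hij : i ⋖ j) (hjk : j ⋖ k) : v i j * h j k = h i j * v j k := by
  have entry : (v * h) i k = (h * v) i k := congr_fun₂ hvh.eq i k
  rw [hv.mul_apply_of_covBy_of_covBy hh hij hjk, hh.mul_apply_of_covBy_of_covBy hv hij hjk,
    add_comm (h i k)] at entry
  exact add_right_cancel entry

end Ring

theorem isUnit_det [Fintype n] [CommRing R] {u : Matrix n n R} (hu : IsUpperUnitriangular u) :
    IsUnit u.det := by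
  simp [det_of_isUpperTriangular hu.isUpperTriangular, hu.diag_eq_one]

end IsUpperUnitriangular

theorem unitriangular_centralizers_not_conjugate_general [Fintype n] [CommRing R]
    {g h : Matrix n n R} (hg : IsUpperUnitriangular g) (hh : IsUpperUnitriangular h)
    (hij : i ⋖ j) (hjk : j ⋖ k) (hgh : g i j * h j k ≠ h i j * g j k) :
    ¬ ∃ u : Matrix n n R, IsUpperUnitriangular u ∧
        (fun m => u * m * u⁻¹) '' unitriangularCentralizer g ⊆ unitriangularCentralizer h := by
  rintro ⟨u, hu, hsub⟩
  obtain ⟨hv, hvh⟩ : u * g * u⁻¹ ∈ unitriangularCentralizer h :=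
    hsub ⟨g, ⟨hg, Commute.refl g⟩, rfl⟩
  have huv : SemiconjBy u g (u * g * u⁻¹) :=
    (nonsing_inv_mul_cancel_right u (u * g) hu.isUnit_det).symm
  have hcomm := hv.apply_mul_apply_eq_of_commute hh hvh hij hjk
  rw [hu.apply_eq_of_semiconjBy hg hv huv hij, hu.apply_eq_of_semiconjBy hg hv huv hjk] at hcomm
  exact hgh hcomm

end LinearOrder

theorem isUpperUnitriangular_iff_isUnitriangular {m : Matrix (Fin 3) (Fin 3) ℂ} :
    IsUpperUnitriangular m ↔ IsUnitriangular m := by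
  constructor
  · rintro ⟨lower, diag⟩
    exact ⟨diag 0, diag 1, diag 2, lower (by decide), lower (by decide), lower (by decide)⟩
  · rintro ⟨h00, h11, h22, h10, h20, h21⟩
    refine ⟨fun a b hba => ?_, fun a => ?_⟩
    · fin_cases a <;> fin_cases b <;> simp_all
    · fin_cases a <;> assumption

theorem unitriangularCentralizer_eq_ZU (g : Matrix (Fin 3) (Fin 3) ℂ) :
    unitriangularCentralizer g = ZU g :=
  Set.ext fun _ => and_congr_left' isUpperUnitriangular_iff_isUnitriangular

/-- For `x = [[1,1,1],[0,1,0],[0,0,1]]` and `y = [[1,0,1],[0,1,1],[0,0,1]]` in the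
unitriangular group `U`, the centralisers `Z_U(x)` and `Z_U(y)` are not conjugate
in `U`: there is no `u ∈ U` with `u · Z_U(x) · u⁻¹ = Z_U(y)`. -/
theorem unitriangular_centralizers_not_conjugate :
    ¬ ∃ u : Matrix (Fin 3) (Fin 3) ℂ, IsUnitriangular u ∧
        (fun m => u * m * u⁻¹) '' ZU !![1, 1, 1; 0, 1, 0; 0, 0, 1] =
          ZU !![1, 0, 1; 0, 1, 1; 0, 0, 1] := by
  simp only [← unitriangularCentralizer_eq_ZU, ← isUpperUnitriangular_iff_isUnitriangular]
  rintro ⟨u, hu, hconj⟩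
  refine unitriangular_centralizers_not_conjugate_general (i := 0) (j := 1) (k := 2)
    ?_ ?_ (by simp) (by simp) (by simp) ⟨u, hu, hconj.subset⟩ <;>
  simp [isUpperUnitriangular_iff_isUnitriangular, IsUnitriangular]
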